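/- arXiv:2604.02928 — 3 statements merged into one kernel-verified Lean document; each statement's English description precedes it below -/
import Mathlib

section
/- Online DMD rank-one update formula. Let X ∈ ℝ^{m×n} satisfy that X Xᵀ is invertible, let Y ∈ ℝ^{m×n}, and let x, y ∈ ℝ^m. Set P = (X Xᵀ)⁻¹, A = (Y Xᵀ) P, γ = 1/(1 + xᵀ P x), X₁ = [X, x] and Y₁ = [Y, y] (appending x, y as new last columns). Then X₁ X₁ᵀ = X Xᵀ + x xᵀ is invertible and (Y₁ X₁ᵀ)(X₁ X₁ᵀ)⁻¹ = A + γ (y − A x) xᵀ P. -/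
open Matrix

/-- Column vector as an `m × 1` matrix. -/
def colv {m : ℕ} (g : Fin m → ℝ) : Matrix (Fin m) (Fin 1) ℝ :=
  Matrix.of fun i _ => g i

/-- online DMD rank-one update formula.  With `P = (XXᵀ)⁻¹`,
`A = (YXᵀ)P`, `γ = 1/(1 + xᵀPx)`, and `X₁ = [X, x]`, `Y₁ = [Y, y]`, the matrix
`X₁X₁ᵀ = XXᵀ + xxᵀ` is invertible and
`(Y₁X₁ᵀ)(X₁X₁ᵀ)⁻¹ = A + γ(y − Ax)xᵀP`. -/
theorem stmt11 {m n : ℕ}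
    (X Y : Matrix (Fin m) (Fin n) ℝ) (hX : IsUnit (X * Xᵀ).det)
    (x y : Fin m → ℝ)
    (P : Matrix (Fin m) (Fin m) ℝ) (hP : P = (X * Xᵀ)⁻¹)
    (A : Matrix (Fin m) (Fin m) ℝ) (hA : A = Y * Xᵀ * P)
    (γ : ℝ) (hγ : γ = 1 / (1 + x ⬝ᵥ P.mulVec x))
    (X₁ : Matrix (Fin m) (Fin n ⊕ Fin 1) ℝ) (hX₁ : X₁ = Matrix.fromCols X (colv x))
    (Y₁ : Matrix (Fin m) (Fin n ⊕ Fin 1) ℝ) (hY₁ : Y₁ = Matrix.fromCols Y (colv y)) :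
    X₁ * X₁ᵀ = X * Xᵀ + Matrix.vecMulVec x x ∧
    IsUnit (X₁ * X₁ᵀ).det ∧
    Y₁ * X₁ᵀ * (X₁ * X₁ᵀ)⁻¹ =
      A + γ • Matrix.vecMulVec (y - A.mulVec x) (Matrix.vecMul x P) := by
  have hcol : ∀ (Z : Matrix (Fin m) (Fin n) ℝ) (z : Fin m → ℝ),
      Matrix.fromCols Z (colv z) * (Matrix.fromCols X (colv x))ᵀ
        = Z * Xᵀ + Matrix.vecMulVec z x := by
    intro Z z
    rw [Matrix.transpose_fromCols, Matrix.fromCols_mul_fromRows]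
    congr 1
    ext i j
    simp [Matrix.mul_apply, colv, Matrix.vecMulVec_apply]
  have hXX : X₁ * X₁ᵀ = X * Xᵀ + Matrix.vecMulVec x x := by rw [hX₁, hcol]
  have hYX : Y₁ * X₁ᵀ = Y * Xᵀ + Matrix.vecMulVec y x := by rw [hX₁, hY₁, hcol]
  have hpsd : P.PosSemidef := by
    have h : (X * Xᵀ).PosSemidef := by
      have := Matrix.posSemidef_self_mul_conjTranspose X
      rwa [Matrix.conjTranspose_eq_transpose_of_trivial] at this
    rw [hP]
    exact h.inv
  have hc : 0 ≤ x ⬝ᵥ P.mulVec x := by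
    simpa using hpsd.dotProduct_mulVec_nonneg x
  have hSP : X * Xᵀ * P = 1 := by rw [hP, Matrix.mul_nonsing_inv _ hX]
  have hPS : P * (X * Xᵀ) = 1 := by rw [hP, Matrix.nonsing_inv_mul _ hX]
  have hg : γ + γ * (x ⬝ᵥ P.mulVec x) = 1 := by
    rw [hγ]; field_simp
  have hAS : A * (X * Xᵀ) = Y * Xᵀ := by
    rw [hA, Matrix.mul_assoc, hPS, Matrix.mul_one]
  -- any rank-one update times the new Gram matrix
  have key : ∀ w : Fin m → ℝ,
      (γ • Matrix.vecMulVec w (Matrix.vecMul x P)) * (X * Xᵀ + Matrix.vecMulVec x x)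
        = Matrix.vecMulVec w x := by
    intro w
    rw [Matrix.smul_mul, Matrix.mul_add, Matrix.vecMulVec_mul, Matrix.vecMul_vecMul, hPS,
      Matrix.vecMul_one, Matrix.vecMulVec_mul, Matrix.vecMul_vecMulVec,
      ← Matrix.dotProduct_mulVec]
    ext i j
    simp only [Matrix.smul_apply, Matrix.add_apply, Matrix.vecMulVec_apply, Pi.smul_apply,
      smul_eq_mul]
    linear_combination (w i * x j) * hg
  have hinv : (P - γ • Matrix.vecMulVec (P.mulVec x) (Matrix.vecMul x P))
      * (X * Xᵀ + Matrix.vecMulVec x x) = 1 := by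
    rw [Matrix.sub_mul, key, Matrix.mul_add, hPS, Matrix.mul_vecMulVec, add_sub_cancel_right]
  have hu : IsUnit (X₁ * X₁ᵀ).det := by
    rw [hXX]
    exact Matrix.isUnit_det_of_left_inverse hinv
  refine ⟨hXX, hu, ?_⟩
  have hfin : Y₁ * X₁ᵀ =
      (A + γ • Matrix.vecMulVec (y - A.mulVec x) (Matrix.vecMul x P)) * (X₁ * X₁ᵀ) := by
    rw [hYX, hXX, Matrix.add_mul, key, Matrix.mul_add, hAS, Matrix.mul_vecMulVec,
      Matrix.sub_vecMulVec]
    abel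
  rw [hfin, Matrix.mul_nonsing_inv_cancel_right _ _ hu]
end

section
/- Cholesky-based online DMD update. Let X ∈ ℝ^{m×n} and R ∈ ℝ^{m×m} be invertible with X Xᵀ = Rᵀ R, let Y ∈ ℝ^{m×n}, and let x, y ∈ ℝ^m. Set A = (Y Xᵀ)(Rᵀ R)⁻¹, p = R⁻¹(R⁻ᵀ x), γ = 1/(1 + xᵀ p), X₁ = [X, x] and Y₁ = [Y, y]. Then: (i) (Y₁ X₁ᵀ)(X₁ X₁ᵀ)⁻¹ = A + γ (y − A x) pᵀ; and (ii) if U ∈ ℝ^{(m+1)×(m+1)} is orthogonal and U · [R; xᵀ] = [R'; 0ᵀ] (i.e. the last row of the product is zero, and R' denotes its first m rows), then R'ᵀ R' = X Xᵀ + x xᵀ = X₁ X₁ᵀ. -/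
open Matrix

/-- Row vector as a `1 × n` matrix. -/
def rowv {n : ℕ} (g : Fin n → ℝ) : Matrix (Fin 1) (Fin n) ℝ :=
  Matrix.of fun _ j => g j

/-- Cholesky-based online DMD update.  With `XXᵀ = RᵀR` (`R`
invertible), `A = (YXᵀ)(RᵀR)⁻¹`, `p = R⁻¹(R⁻ᵀx)`, `γ = 1/(1 + xᵀp)`,
`X₁ = [X, x]`, `Y₁ = [Y, y]`:
(i) `(Y₁X₁ᵀ)(X₁X₁ᵀ)⁻¹ = A + γ(y − Ax)pᵀ`; and
(ii) if `U` is orthogonal with `U·[R; xᵀ] = [R'; 0ᵀ]`, then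
`R'ᵀR' = XXᵀ + xxᵀ = X₁X₁ᵀ`. -/
theorem stmt12 {m n : ℕ}
    (X Y : Matrix (Fin m) (Fin n) ℝ)
    (R : Matrix (Fin m) (Fin m) ℝ) (hR : IsUnit R.det)
    (hXXt : X * Xᵀ = Rᵀ * R)
    (x y : Fin m → ℝ)
    (A : Matrix (Fin m) (Fin m) ℝ) (hA : A = Y * Xᵀ * (Rᵀ * R)⁻¹)
    (p : Fin m → ℝ) (hp : p = R⁻¹.mulVec ((Rᵀ)⁻¹.mulVec x))
    (γ : ℝ) (hγ : γ = 1 / (1 + x ⬝ᵥ p))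
    (X₁ : Matrix (Fin m) (Fin n ⊕ Fin 1) ℝ) (hX₁ : X₁ = Matrix.fromCols X (colv x))
    (Y₁ : Matrix (Fin m) (Fin n ⊕ Fin 1) ℝ) (hY₁ : Y₁ = Matrix.fromCols Y (colv y)) :
    Y₁ * X₁ᵀ * (X₁ * X₁ᵀ)⁻¹ = A + γ • Matrix.vecMulVec (y - A.mulVec x) p ∧
    ∀ (U : Matrix (Fin m ⊕ Fin 1) (Fin m ⊕ Fin 1) ℝ),
      Uᵀ * U = 1 → U * Uᵀ = 1 →
      ∀ (R' : Matrix (Fin m) (Fin m) ℝ),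
        U * Matrix.fromRows R (rowv x) = Matrix.fromRows R' 0 →
        R'ᵀ * R' = X * Xᵀ + Matrix.vecMulVec x x ∧
        X * Xᵀ + Matrix.vecMulVec x x = X₁ * X₁ᵀ := by
  have hRt : IsUnit Rᵀ.det := by rwa [Matrix.det_transpose]
  have hG : IsUnit (Rᵀ * R).det := by rw [Matrix.det_mul]; exact hRt.mul hR
  have hXX : X * Xᵀ + Matrix.vecMulVec x x = X₁ * X₁ᵀ := by
    subst hX₁
    ext i j
    simp [Matrix.mul_apply, Matrix.vecMulVec_apply, colv]
  have hYX : Y₁ * X₁ᵀ = Y * Xᵀ + Matrix.vecMulVec y x := by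
    subst hX₁ hY₁
    ext i j
    simp [Matrix.mul_apply, Matrix.vecMulVec_apply, colv]
  have hp' : p = (Rᵀ * R)⁻¹ *ᵥ x := by
    rw [hp, Matrix.mulVec_mulVec, Matrix.mul_inv_rev]
  have hGp : (Rᵀ * R) *ᵥ p = x := by
    rw [hp', Matrix.mulVec_mulVec, Matrix.mul_nonsing_inv _ hG, Matrix.one_mulVec]
  have hpG : p ᵥ* (Rᵀ * R) = x := by
    rw [← Matrix.mulVec_transpose, Matrix.transpose_mul, Matrix.transpose_transpose, hGp]
  have hxG : x ᵥ* (Rᵀ * R)⁻¹ = p := by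
    rw [← hpG, Matrix.vecMul_vecMul, Matrix.mul_nonsing_inv _ hG, Matrix.vecMul_one]
  have hpos : 0 ≤ x ⬝ᵥ p := by
    have h : x ⬝ᵥ p = (R *ᵥ p) ⬝ᵥ (R *ᵥ p) := by
      rw [Matrix.dotProduct_mulVec, ← Matrix.mulVec_transpose, Matrix.mulVec_mulVec, hGp]
    rw [h]
    exact Finset.sum_nonneg fun i _ => mul_self_nonneg _
  have hγ1 : γ * (1 + x ⬝ᵥ p) = 1 := by
    rw [hγ]; field_simp
  have hAG : A * (Rᵀ * R) = Y * Xᵀ := by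
    rw [hA, Matrix.mul_assoc, Matrix.nonsing_inv_mul _ hG, Matrix.mul_one]
  have hN : (Rᵀ * R + Matrix.vecMulVec x x) *
      ((Rᵀ * R)⁻¹ - γ • Matrix.vecMulVec p p) = 1 := by
    rw [Matrix.mul_sub, Matrix.add_mul, Matrix.mul_nonsing_inv _ hG, Matrix.vecMulVec_mul, hxG,
      Matrix.mul_smul, Matrix.add_mul, Matrix.mul_vecMulVec, hGp, Matrix.vecMulVec_mul_vecMulVec]
    ext i j
    simp only [Matrix.add_apply, Matrix.sub_apply, Matrix.smul_apply, Matrix.vecMulVec_apply,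
      Pi.smul_apply, smul_eq_mul]
    linear_combination (-(x i * p j)) * hγ1
  have hNu := Matrix.isUnit_det_of_right_inverse hN
  refine ⟨?_, ?_⟩
  · have key : Y₁ * X₁ᵀ = (A + γ • Matrix.vecMulVec (y - A.mulVec x) p) *
        (Rᵀ * R + Matrix.vecMulVec x x) := by
      rw [hYX, ← hAG, Matrix.mul_add, Matrix.add_mul, Matrix.add_mul, Matrix.smul_mul,
        Matrix.smul_mul, Matrix.vecMulVec_mul, hpG, Matrix.mul_vecMulVec,
        Matrix.vecMulVec_mul_vecMulVec, dotProduct_comm p x]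
      ext i j
      simp only [Matrix.add_apply, Matrix.smul_apply, Matrix.vecMulVec_apply,
        Pi.smul_apply, Pi.sub_apply, smul_eq_mul]
      linear_combination (-((y i - (A *ᵥ x) i) * x j)) * hγ1
    rw [key, ← hXX, hXXt, Matrix.mul_assoc, Matrix.mul_nonsing_inv _ hNu, Matrix.mul_one]
  · intro U hU _ R' h
    refine ⟨?_, hXX⟩
    have h2 : (Matrix.fromRows R' (0 : Matrix (Fin 1) (Fin m) ℝ))ᵀ *
          Matrix.fromRows R' (0 : Matrix (Fin 1) (Fin m) ℝ)
        = (Matrix.fromRows R (rowv x))ᵀ * Matrix.fromRows R (rowv x) := by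
      rw [← h, Matrix.transpose_mul, Matrix.mul_assoc, ← Matrix.mul_assoc Uᵀ, hU, Matrix.one_mul]
    rw [hXXt]
    ext i j
    have h3 := congrFun (congrFun h2 i) j
    simpa [Matrix.mul_apply, Matrix.vecMulVec_apply, rowv] using h3
end

section
/- One-basis Exact DMD eigenvector property. Let Q = [Q_x, q] ∈ ℝ^{m×r} have orthonormal columns, with Q_x its first r−1 columns. Let Ŝ_x ∈ ℝ^{(r−1)×n} have full row rank and S̃_y ∈ ℝ^{r×n}, and set M = S̃_y Ŝ_xᵀ(Ŝ_x Ŝ_xᵀ)⁻¹ ∈ ℝ^{r×(r−1)} and A_ex = Q M Q_xᵀ. If w ∈ ℝ^{r−1} and λ ∈ ℝ satisfy M' w = λ w, where M' ∈ ℝ^{(r−1)×(r−1)} consists of the first r−1 rows of M, then z = Q M w satisfies A_ex z = λ z; hence if z ≠ 0 it is an eigenvector of A_ex with eigenvalue λ. -/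
open Matrix

/-- one-basis Exact DMD eigenvector property.  With
`Q = [Q_x, q]` having orthonormal columns, `Ŝ_x` of full row rank,
`M = S̃_yŜ_xᵀ(Ŝ_xŜ_xᵀ)⁻¹` and `A_ex = Q M Q_xᵀ`, if `M' w = λ w` where `M'`
is the first `r−1` rows of `M`, then `z = Q M w` satisfies `A_ex z = λ z`;
hence if `z ≠ 0` it is an eigenvector of `A_ex` with eigenvalue `λ`. -/
theorem stmt19 {m r n : ℕ}
    (Qx : Matrix (Fin m) (Fin r) ℝ) (q : Fin m → ℝ)
    (Q : Matrix (Fin m) (Fin r ⊕ Fin 1) ℝ) (hQdef : Q = Matrix.fromCols Qx (colv q))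
    (hQ : Qᵀ * Q = 1)
    (Sx : Matrix (Fin r) (Fin n) ℝ) (hSx : IsUnit (Sx * Sxᵀ).det)
    (Sy : Matrix (Fin r ⊕ Fin 1) (Fin n) ℝ)
    (M : Matrix (Fin r ⊕ Fin 1) (Fin r) ℝ) (hM : M = Sy * Sxᵀ * (Sx * Sxᵀ)⁻¹)
    (Aex : Matrix (Fin m) (Fin m) ℝ) (hA : Aex = Q * M * Qxᵀ)
    (w : Fin r → ℝ) (lam : ℝ)
    (hw : (M.submatrix Sum.inl id).mulVec w = lam • w) :
    Aex.mulVec (Q.mulVec (M.mulVec w)) = lam • Q.mulVec (M.mulVec w) ∧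
    (Q.mulVec (M.mulVec w) ≠ 0 →
      Module.End.HasEigenvector (Matrix.mulVecLin Aex) lam (Q.mulVec (M.mulVec w))) := by
  have key : Qxᵀ.mulVec (Q.mulVec (M.mulVec w)) = lam • w := by
    rw [← hw]
    have h : Qᵀ.mulVec (Q.mulVec (M.mulVec w)) = M.mulVec w := by
      rw [Matrix.mulVec_mulVec, hQ, Matrix.one_mulVec]
    funext i
    have h2 := congrFun h (Sum.inl i)
    have h3 : Qxᵀ i = Qᵀ (Sum.inl i) := by
      funext k
      simp [hQdef]
    calc Qxᵀ.mulVec (Q.mulVec (M.mulVec w)) i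
        = Qᵀ.mulVec (Q.mulVec (M.mulVec w)) (Sum.inl i) := by
          simp only [Matrix.mulVec]
          exact congrArg (fun v => v ⬝ᵥ _) h3
      _ = _ := h2
  have main : Aex.mulVec (Q.mulVec (M.mulVec w)) = lam • Q.mulVec (M.mulVec w) := by
    rw [hA, ← Matrix.mulVec_mulVec, key, Matrix.mulVec_smul, ← Matrix.mulVec_mulVec]
  refine ⟨main, fun hz => ⟨?_, hz⟩⟩
  rw [Module.End.mem_eigenspace_iff, Matrix.mulVecLin_apply]
  exact main
end
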